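/- Let g = sl2(C) ⋉ h be a finite-dimensional sympathetic complex Lie algebra whose Levi subalgebra is isomorphic to sl2(C) and whose radical h decomposes into 4 simple sl2(C)-modules V_n, V_m, V_p, V_k (of highest weights n, m, p, k) satisfying the convention, with Z(h) = V_k. Then n, m, p and k are all even; equivalently, each of the four modules has odd dimension. -/

import Mathlib

namespace Symp

variable (g : Type*) [LieRing g] [LieAlgebra ℂ g]

/-- A derivation of `g` is inner if it is given by the adjoint action of some element. -/
def IsInnerDer {g : Type*} [LieRing g] [LieAlgebra ℂ g] (D : LieDerivation ℂ g g) : Prop :=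
  ∃ x : g, ∀ y : g, D y = ⁅x, y⁆

/-- `g` is perfect: `[g,g] = g`. -/
def IsPerfectLie : Prop :=
  ⁅(⊤ : LieIdeal ℂ g), (⊤ : LieIdeal ℂ g)⁆ = ⊤

/-- A sympathetic Lie algebra: trivial centre, perfect, all derivations inner. -/
def IsSympathetic : Prop :=
  LieAlgebra.center ℂ g = ⊥ ∧ IsPerfectLie g ∧
    ∀ D : LieDerivation ℂ g g, IsInnerDer D

/-- `s` is a simple Levi subalgebra of `g`: it is a simple Lie algebra and a vector-space
complement to the radical. -/
def IsSimpleLevi (s : LieSubalgebra ℂ g) : Prop :=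
  LieAlgebra.IsSimple ℂ s ∧
    IsCompl s.toSubmodule (LieAlgebra.radical ℂ g).toSubmodule

/-- `s` is a Levi subalgebra of `g` isomorphic to `sl₂(ℂ)`. -/
def IsSl2Levi (s : LieSubalgebra ℂ g) : Prop :=
  Nonempty (s ≃ₗ⁅ℂ⁆ LieAlgebra.SpecialLinear.sl (Fin 2) ℂ) ∧
    IsCompl s.toSubmodule (LieAlgebra.radical ℂ g).toSubmodule

/-- The subspace spanned by all brackets `⁅x, y⁆` with `x ∈ A`, `y ∈ B`. -/
def lieSpan2 (A B : Submodule ℂ g) : Submodule ℂ g :=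
  Submodule.span ℂ {z : g | ∃ x ∈ A, ∃ y ∈ B, z = ⁅x, y⁆}

/-- A subspace of `g` invariant under the bracket action of the subalgebra `s`. -/
def Invariant (s : LieSubalgebra ℂ g) (W : Submodule ℂ g) : Prop :=
  ∀ x ∈ s, ∀ w ∈ W, ⁅x, w⁆ ∈ W

/-- `V` is an irreducible `s`-submodule of `g`. -/
def IsIrreducibleSMod (s : LieSubalgebra ℂ g) (V : Submodule ℂ g) : Prop :=
  V ≠ ⊥ ∧ Invariant g s V ∧
    ∀ W : Submodule ℂ g, W ≤ V → Invariant g s W → W = ⊥ ∨ W = V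

/-- The family `V` is a decomposition of the radical of `g` into irreducible `s`-modules. -/
def IsDecomp (s : LieSubalgebra ℂ g) {k : ℕ} (V : Fin k → Submodule ℂ g) : Prop :=
  (∀ i, IsIrreducibleSMod g s (V i)) ∧ iSupIndep V ∧
    (⨆ i, V i) = (LieAlgebra.radical ℂ g).toSubmodule

/-- The convention: any nonzero bracket of two of the modules equals one of them,
for a unique index. -/
def Convention {k : ℕ} (V : Fin k → Submodule ℂ g) : Prop :=
  ∀ i j, lieSpan2 g (V i) (V j) ≠ ⊥ → ∃! q, lieSpan2 g (V i) (V j) = V q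

/-- The centre `Z(h)` of the radical `h = Rad(g)`, as a subspace of `g`. -/
def centerRad : Submodule ℂ g where
  carrier := {x | x ∈ LieAlgebra.radical ℂ g ∧ ∀ y ∈ LieAlgebra.radical ℂ g, ⁅x, y⁆ = 0}
  add_mem' := by
    rintro a b ⟨ha, ha'⟩ ⟨hb, hb'⟩
    exact ⟨add_mem ha hb, fun y hy => by rw [add_lie, ha' y hy, hb' y hy, add_zero]⟩
  zero_mem' := ⟨zero_mem _, fun y _ => zero_lie y⟩
  smul_mem' := by
    rintro c a ⟨ha, ha'⟩
    exact ⟨SMulMemClass.smul_mem c ha, fun y hy => by rw [smul_lie, ha' y hy, smul_zero]⟩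

/-- The derived subalgebra `[h,h]` of the radical `h = Rad(g)`, as a subspace of `g`. -/
def derivedRad : Submodule ℂ g :=
  lieSpan2 g (LieAlgebra.radical ℂ g).toSubmodule (LieAlgebra.radical ℂ g).toSubmodule

end Symp

/-!
Each bracket `[V_i, V_j] = V_q` contains the highest weight of `V_q`, so `d i + d j` and `d q` have
the same parity. If moreover `i = j`, antisymmetry of the bracket forces `d i` to exceed `d q / 2`
by an odd number, so two summands with the same nonzero square have the same parity. As `g` is
perfect, the radical acts nilpotently, and brackets strictly increase the depth in the lower central
series.

Nonnegative integers `l i`, not all zero, with `l i + l j = l q` whenever `[V_i, V_j] = V_q` would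
define a derivation acting on `V_i` by `l i` and on the Levi subalgebra by `0`. Its trace is
positive, whereas inner derivations of a perfect Lie algebra have trace zero. So every such `l`
fails at some bracket. Whatever the number of odd summands, if there are any, this provides enough
brackets to contradict the parity rules, the Jacobi identity or the increase of depth.
-/

namespace Symp

open LieModule

/-! ### Nilpotency of the radical -/

section Nilpotency

theorem map_lcs_le {R L M N : Type*} [CommRing R] [LieRing L] [LieAlgebra R L]
    [AddCommGroup M] [Module R M] [LieRingModule L M] [LieModule R L M]
    [AddCommGroup N] [Module R N] [LieRingModule L N] [LieModule R L N]
    (f : M →ₗ⁅R,L⁆ N) (J : LieIdeal R L) (n : ℕ) : (J.lcs M n).map f ≤ J.lcs N n := by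
  induction n with
  | zero => exact le_top
  | succ n ih =>
    rw [LieIdeal.lcs_succ, LieIdeal.lcs_succ, LieSubmodule.map_bracket_eq]
    exact LieSubmodule.mono_lie_right J ih

variable {K L M : Type*} [Field K] [IsAlgClosed K] [CharZero K] [LieRing L] [LieAlgebra K L]
  [AddCommGroup M] [Module K M] [FiniteDimensional K M]
  [LieRingModule L M] [LieModule K L M]

theorem exists_ne_bot_lie_top_lie_eq_bot [Nontrivial M] (I : LieIdeal K L)
    [LieAlgebra.IsSolvable I] :
    ∃ N : LieSubmodule K L M, N ≠ ⊥ ∧ ⁅⁅(⊤ : LieIdeal K L), I⁆, N⁆ = ⊥ := by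
  obtain ⟨χ, hχ⟩ := exists_nontrivial_weightSpace_of_isSolvable K I M
  have lie_eq_smul : ∀ m ∈ weightSpaceOfIsLieTower K M χ, ∀ b : I, ⁅(b : L), m⁆ = χ b • m :=
    fun m hm => (mem_weightSpace χ m).mp hm
  refine ⟨weightSpaceOfIsLieTower K M χ, ?_, ?_⟩
  · obtain ⟨⟨m, hm⟩, hm0⟩ := exists_ne (0 : weightSpace M χ)
    exact fun h => hm0 (Subtype.ext ((LieSubmodule.eq_bot_iff _).mp h m hm))
  · -- `L` preserves the weight space, so commutators with `I` act on it by commutators of scalars.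
    rw [LieSubmodule.lie_eq_bot_iff]
    intro x hx m hm
    rw [← LieSubmodule.mem_toSubmodule, LieSubmodule.lieIdeal_oper_eq_linear_span'] at hx
    induction hx using Submodule.span_induction with
    | mem x hx =>
      obtain ⟨z, -, b, hb, rfl⟩ := hx
      have hz : ⁅z, m⁆ ∈ weightSpaceOfIsLieTower K M χ := LieSubmodule.lie_mem _ hm
      rw [lie_lie, lie_eq_smul m hm ⟨b, hb⟩, lie_eq_smul _ hz ⟨b, hb⟩, lie_smul, sub_self]
    | zero => exact zero_lie m
    | add x y _ _ hx hy => rw [add_lie, hx, hy, add_zero]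
    | smul c x _ hx => rw [smul_lie, hx, smul_zero]

variable (M) in
theorem exists_lcs_lie_top_eq_bot (I : LieIdeal K L) [LieAlgebra.IsSolvable I] :
    ∃ n, (⁅(⊤ : LieIdeal K L), I⁆ : LieIdeal K L).lcs M n = ⊥ := by
  induction hr : Module.finrank K M using Nat.strong_induction_on generalizing M with
  | _ r ih =>
    subst hr
    rcases subsingleton_or_nontrivial M with _ | _
    · exact ⟨0, Subsingleton.elim _ _⟩
    obtain ⟨N, hN, hN0⟩ := exists_ne_bot_lie_top_lie_eq_bot (M := M) I
    have hlt : Module.finrank K (M ⧸ N) < Module.finrank K M := by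
      have := N.toSubmodule.finrank_quotient_add_finrank
      have := Submodule.one_le_finrank_iff.mpr (mt (LieSubmodule.toSubmodule_eq_bot N).mp hN)
      change Module.finrank K (M ⧸ N.toSubmodule) < _
      omega
    obtain ⟨n, hn⟩ := ih _ hlt (M ⧸ N) rfl
    have hle : (⁅(⊤ : LieIdeal K L), I⁆ : LieIdeal K L).lcs M n ≤ N := by
      have := map_lcs_le (LieSubmodule.Quotient.mk' N) ⁅(⊤ : LieIdeal K L), I⁆ n
      rwa [hn, le_bot_iff, ← LieModuleHom.le_ker_iff_map, LieSubmodule.Quotient.mk'_ker] at this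
    refine ⟨n + 1, ?_⟩
    rw [LieIdeal.lcs_succ, eq_bot_iff, ← hN0]
    exact LieSubmodule.mono_lie_right _ hle

theorem le_lie_top_of_isCompl {R L : Type*} [CommRing R] [LieRing L] [LieAlgebra R L]
    (hperf : ⁅(⊤ : LieIdeal R L), (⊤ : LieIdeal R L)⁆ = ⊤) {s : LieSubalgebra R L}
    {I : LieIdeal R L} (hs : IsCompl s.toSubmodule I.toSubmodule) :
    I ≤ ⁅(⊤ : LieIdeal R L), I⁆ := by
  have mem_sup (a : L) : a ∈ s.toSubmodule ⊔ I.toSubmodule :=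
    hs.sup_eq_top ▸ Submodule.mem_top
  have lie_mem_sup : ∀ a b : L,
      ⁅a, b⁆ ∈ s.toSubmodule ⊔ (⁅(⊤ : LieIdeal R L), I⁆ : LieIdeal R L).toSubmodule := by
    intro a b
    obtain ⟨a₁, ha₁, a₂, ha₂, rfl⟩ := Submodule.mem_sup.mp (mem_sup a)
    obtain ⟨b₁, hb₁, b₂, hb₂, rfl⟩ := Submodule.mem_sup.mp (mem_sup b)
    have split : ⁅a₁ + a₂, b₁ + b₂⁆ = ⁅a₁, b₁⁆ + (⁅a₁ + a₂, b₂⁆ - ⁅b₁, a₂⁆) := by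
      rw [← lie_skew b₁ a₂, lie_add, add_lie, add_lie]; abel
    rw [split]
    exact Submodule.add_mem_sup (s.lie_mem ha₁ hb₁)
      (sub_mem (LieSubmodule.lie_mem_lie (LieSubmodule.mem_top _) hb₂)
        (LieSubmodule.lie_mem_lie (LieSubmodule.mem_top _) ha₂))
  have hsup : s.toSubmodule ⊔ (⁅(⊤ : LieIdeal R L), I⁆ : LieIdeal R L).toSubmodule = ⊤ := by
    have top_eq_span := congrArg LieSubmodule.toSubmodule hperf
    rw [LieSubmodule.lieIdeal_oper_eq_linear_span', LieSubmodule.top_toSubmodule] at top_eq_span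
    rw [eq_top_iff, ← top_eq_span, Submodule.span_le]
    rintro _ ⟨a, -, b, -, rfl⟩
    exact lie_mem_sup a b
  have hle : (⁅(⊤ : LieIdeal R L), I⁆ : LieIdeal R L).toSubmodule ≤ I.toSubmodule :=
    LieSubmodule.lie_le_right I ⊤
  exact (eq_of_le_of_inf_le_of_sup_le (z := s.toSubmodule) hle
    (hs.symm.inf_eq_bot.trans_le bot_le)
    (le_top.trans_eq (sup_comm s.toSubmodule _ ▸ hsup).symm)).ge

theorem exists_lcs_eq_bot_of_isCompl {K L : Type*} [Field K] [IsAlgClosed K] [CharZero K]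
    [LieRing L] [LieAlgebra K L] [FiniteDimensional K L]
    (hperf : ⁅(⊤ : LieIdeal K L), (⊤ : LieIdeal K L)⁆ = ⊤) {s : LieSubalgebra K L}
    {I : LieIdeal K L} [LieAlgebra.IsSolvable I] (hs : IsCompl s.toSubmodule I.toSubmodule) :
    ∃ n, I.lcs L n = ⊥ := by
  have hI : ⁅(⊤ : LieIdeal K L), I⁆ = I :=
    le_antisymm (LieSubmodule.lie_le_right I ⊤) (le_lie_top_of_isCompl hperf hs)
  simpa only [hI] using exists_lcs_lie_top_eq_bot L I

end Nilpotency

/-! ### Diagonal derivations -/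

section Grading

theorem iSupIndep_option_elim {α ι : Type*} [CompleteLattice α] [IsModularLattice α] {a : α}
    {t : ι → α} (ht : iSupIndep t) (ha : Disjoint a (⨆ i, t i)) :
    iSupIndep fun o : Option ι => o.elim a t := by
  rintro (_ | i)
  · refine ha.mono_right (iSup₂_le ?_)
    rintro (_ | j) hj
    exacts [absurd rfl hj, le_iSup t j]
  · have hi : Disjoint (t i ⊔ ⨆ (j) (_ : j ≠ i), t j) a :=
      ha.symm.mono_left (sup_le (le_iSup t i) (iSup₂_le fun j _ => le_iSup t j))
    refine ((ht i).disjoint_sup_right_of_disjoint_sup_left hi).mono_right (iSup₂_le ?_)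
    rintro (_ | j) hj
    exacts [le_sup_right, le_sup_of_le_left (le_iSup₂_of_le j (fun h => hj (h ▸ rfl)) le_rfl)]

variable {K ι : Type*} [Field K] [DecidableEq ι]

section Module

variable {M : Type*} [AddCommGroup M] [Module K M] {U : ι → Submodule K M}

theorem exists_linearMap_eq_smul (hU : DirectSum.IsInternal U) (c : ι → K) :
    ∃ D : M →ₗ[K] M, ∀ i, ∀ x ∈ U i, D x = c i • x := by
  let e := LinearEquiv.ofBijective (DirectSum.coeLinearMap U) hU
  refine ⟨DirectSum.toModule K ι M (fun i => c i • (U i).subtype) ∘ₗ e.symm, fun i x hx => ?_⟩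
  have he : e.symm x = DirectSum.lof K ι (fun i => U i) i ⟨x, hx⟩ := by
    rw [LinearEquiv.symm_apply_eq]
    exact (DirectSum.coeLinearMap_lof U i ⟨x, hx⟩).symm
  simp [he]

theorem trace_eq_sum_mul_finrank [Fintype ι] [FiniteDimensional K M]
    (hU : DirectSum.IsInternal U) {c : ι → K} {D : M →ₗ[K] M}
    (hD : ∀ i, ∀ x ∈ U i, D x = c i • x) :
    LinearMap.trace K M D = ∑ i, c i * Module.finrank K (U i) := by
  have mapsTo (i) : Set.MapsTo D (U i) (U i) := fun x hx => by
    rw [hD i x hx]; exact (U i).smul_mem _ hx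
  rw [LinearMap.trace_eq_sum_trace_restrict hU mapsTo]
  refine Finset.sum_congr rfl fun i _ => ?_
  have : D.restrict (mapsTo i) = c i • LinearMap.id :=
    LinearMap.ext fun x => Subtype.ext (hD i x x.2)
  rw [this, map_smul, LinearMap.trace_id, smul_eq_mul]

end Module

theorem exists_lieDerivation_eq_smul {L : Type*} [LieRing L] [LieAlgebra K L]
    {U : ι → Submodule K L} (hU : DirectSum.IsInternal U) (c : ι → K)
    (hc : ∀ i j, ∀ x ∈ U i, ∀ y ∈ U j, ⁅x, y⁆ = 0 ∨ ∃ q, c i + c j = c q ∧ ⁅x, y⁆ ∈ U q) :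
    ∃ D : LieDerivation K L L, ∀ i, ∀ x ∈ U i, D x = c i • x := by
  obtain ⟨D, hD⟩ := exists_linearMap_eq_smul hU c
  have mem_iSup (a : L) : a ∈ ⨆ i, U i := hU.submodule_iSup_eq_top ▸ Submodule.mem_top
  have leibniz_homogeneous (i j) : ∀ x ∈ U i, ∀ y ∈ U j, D ⁅x, y⁆ = ⁅x, D y⁆ - ⁅y, D x⁆ := by
    intro x hx y hy
    have hxy : D ⁅x, y⁆ = (c i + c j) • ⁅x, y⁆ := by
      obtain h | ⟨q, hq, hm⟩ := hc i j x hx y hy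
      · rw [h, map_zero, smul_zero]
      · rw [hD q _ hm, hq]
    rw [hxy, hD i x hx, hD j y hy, lie_smul, lie_smul, ← lie_skew x y]
    module
  have leibniz (a b : L) : D ⁅a, b⁆ = ⁅a, D b⁆ - ⁅b, D a⁆ := by
    induction mem_iSup a using Submodule.iSup_induction' with
    | zero => simp
    | add x y _ _ hx hy => rw [add_lie, map_add, hx, hy, add_lie, map_add, lie_add]; abel
    | mem i x hx =>
      induction mem_iSup b using Submodule.iSup_induction' with
      | zero => simp
      | add y z _ _ hy hz => rw [lie_add, map_add, hy, hz, add_lie, map_add, lie_add]; abel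
      | mem j y hy => exact leibniz_homogeneous i j x hx y hy
  exact ⟨⟨D, leibniz⟩, hD⟩

end Grading

theorem mem_lieSpan2 {g : Type*} [LieRing g] [LieAlgebra ℂ g] {A B : Submodule ℂ g} {x y : g}
    (hx : x ∈ A) (hy : y ∈ B) : ⁅x, y⁆ ∈ lieSpan2 g A B :=
  Submodule.subset_span ⟨x, hx, y, hy, rfl⟩

theorem lieSpan2_le {g : Type*} [LieRing g] [LieAlgebra ℂ g] {A B C : Submodule ℂ g} :
    lieSpan2 g A B ≤ C ↔ ∀ x ∈ A, ∀ y ∈ B, ⁅x, y⁆ ∈ C := by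
  refine Submodule.span_le.trans ⟨fun h x hx y hy => h ⟨x, hx, y, hy, rfl⟩, ?_⟩
  rintro h _ ⟨x, hx, y, hy, rfl⟩
  exact h x hx y hy

theorem lieSpan2_comm {g : Type*} [LieRing g] [LieAlgebra ℂ g] (A B : Submodule ℂ g) :
    lieSpan2 g A B = lieSpan2 g B A := by
  refine le_antisymm (lieSpan2_le.mpr fun x hx y hy => ?_) (lieSpan2_le.mpr fun x hx y hy => ?_)
  all_goals exact lie_skew x y ▸ neg_mem (mem_lieSpan2 hy hx)

section Decomposition

variable {g : Type*} [LieRing g] [LieAlgebra ℂ g] {s : LieSubalgebra ℂ g} {k : ℕ}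
  {V : Fin k → Submodule ℂ g}

theorem IsDecomp.isInternal_option_elim (hdec : IsDecomp g s V)
    (hs : IsCompl s.toSubmodule (LieAlgebra.radical ℂ g).toSubmodule) :
    DirectSum.IsInternal fun o : Option (Fin k) => o.elim s.toSubmodule V := by
  obtain ⟨-, hind, hsup⟩ := hdec
  rw [← hsup] at hs
  exact DirectSum.isInternal_submodule_of_iSupIndep_of_iSup_eq_top
    (iSupIndep_option_elim hind hs.disjoint) (iSup_option_elim _ _ |>.trans hs.sup_eq_top)

theorem lie_eq_zero_or_mem_of_additive (hirr : ∀ i, IsIrreducibleSMod g s (V i))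
    (hconv : Convention g V) {l : Fin k → ℕ}
    (hl : ∀ i j q, lieSpan2 g (V i) (V j) = V q → l i + l j = l q) (o p : Option (Fin k)) :
    ∀ x ∈ o.elim s.toSubmodule V, ∀ y ∈ p.elim s.toSubmodule V,
      ⁅x, y⁆ = 0 ∨ ∃ q : Option (Fin k),
        o.elim 0 (fun i => (l i : ℂ)) + p.elim 0 (fun i => (l i : ℂ)) =
          q.elim 0 (fun i => (l i : ℂ)) ∧ ⁅x, y⁆ ∈ q.elim s.toSubmodule V := by
  intro x hx y hy
  rcases o with _ | i <;> rcases p with _ | j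
  · exact .inr ⟨none, add_zero 0, s.lie_mem hx hy⟩
  · exact .inr ⟨some j, zero_add _, (hirr j).2.1 x hx y hy⟩
  · exact .inr ⟨some i, add_zero _, lie_skew x y ▸ neg_mem ((hirr i).2.1 y hy x hx)⟩
  · by_cases hbot : lieSpan2 g (V i) (V j) = ⊥
    · exact .inl ((Submodule.mem_bot ℂ).mp (hbot ▸ mem_lieSpan2 hx hy))
    · obtain ⟨q, hq, -⟩ := hconv i j hbot
      refine .inr ⟨some q, ?_, hq.le (mem_lieSpan2 hx hy)⟩
      simp only [Option.elim_some]
      exact_mod_cast hl i j q hq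

theorem eq_zero_of_additive [FiniteDimensional ℂ g] (hperf : IsPerfectLie g)
    (hder : ∀ D : LieDerivation ℂ g g, IsInnerDer D)
    (hs : IsCompl s.toSubmodule (LieAlgebra.radical ℂ g).toSubmodule)
    (hdec : IsDecomp g s V) (hconv : Convention g V) {l : Fin k → ℕ}
    (hl : ∀ i j q, lieSpan2 g (V i) (V j) = V q → l i + l j = l q) : l = 0 := by
  have hU := hdec.isInternal_option_elim hs
  obtain ⟨D, hD⟩ := exists_lieDerivation_eq_smul hU (fun o => o.elim 0 fun i => (l i : ℂ))
    (lie_eq_zero_or_mem_of_additive hdec.1 hconv hl)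
  obtain ⟨x, hx⟩ := hder D
  have htrace : LinearMap.trace ℂ g D = 0 := by
    rw [show (D : g →ₗ[ℂ] g) = LieModule.toEnd ℂ g g x from LinearMap.ext hx]
    exact LieModule.trace_toEnd_eq_zero_of_mem_lcs ℂ g g le_rfl (hperf.ge (LieSubmodule.mem_top x))
  have hsum : ∑ i, l i * Module.finrank ℂ (V i) = 0 := by
    rw [trace_eq_sum_mul_finrank hU hD, Fintype.sum_option] at htrace
    simp only [Option.elim, zero_mul, zero_add] at htrace
    exact_mod_cast htrace
  funext i
  have hi := Finset.sum_eq_zero_iff.mp hsum i (Finset.mem_univ i)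
  exact (Nat.mul_eq_zero.mp hi).resolve_right (mt Submodule.finrank_eq_zero.mp (hdec.1 i).1)

end Decomposition

/-! ### Highest weight strings for `sl₂` -/

section SlTwo

theorem exists_isSl2Triple_sl_fin_two (R : Type*) [CommRing R] [Nontrivial R] :
    ∃ (h e f : LieAlgebra.SpecialLinear.sl (Fin 2) R) (t : IsSl2Triple h e f),
      t.toLieSubalgebra R = ⊤ := by
  let e := LieAlgebra.SpecialLinear.single (R := R) (0 : Fin 2) 1 zero_ne_one 1
  let f := LieAlgebra.SpecialLinear.single (R := R) (1 : Fin 2) 0 one_ne_zero 1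
  let h := LieAlgebra.SpecialLinear.singleSubSingle (R := R) (0 : Fin 2) 1 1
  have t : IsSl2Triple h e f :=
    { h_ne_zero := fun h0 => by
        simpa [h, Matrix.single] using congrFun (congrFun (congrArg Subtype.val h0) 0) 0
      lie_e_f := Subtype.ext <| by simp [e, f, h, Ring.lie_def]
      lie_h_e_nsmul := Subtype.ext <| by
        simp [e, h, Ring.lie_def, sub_mul, mul_sub, two_nsmul]
      lie_h_f_nsmul := Subtype.ext <| by
        simp [f, h, Ring.lie_def, sub_mul, mul_sub, two_nsmul]; abel }
  refine ⟨h, e, f, t, eq_top_iff.mpr fun x _ => ?_⟩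
  have trace_eq_zero : x.1 0 0 + x.1 1 1 = 0 := (Matrix.trace_fin_two x.1).symm.trans x.2
  rw [IsSl2Triple.mem_toLieSubalgebra_iff, t.lie_e_f]
  refine ⟨x.1 0 1, x.1 1 0, x.1 0 0, Subtype.ext ?_⟩
  ext i j
  fin_cases i <;> fin_cases j <;>
    simp [e, f, h, Matrix.single, eq_neg_of_add_eq_zero_right trace_eq_zero]

theorem exists_isSl2Triple_of_equiv_sl_fin_two {R L : Type*} [CommRing R] [Nontrivial R]
    [LieRing L] [LieAlgebra R L] (φ : LieAlgebra.SpecialLinear.sl (Fin 2) R ≃ₗ⁅R⁆ L) :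
    ∃ (h e f : L) (t : IsSl2Triple h e f), t.toLieSubalgebra R = ⊤ := by
  obtain ⟨h, e, f, t, ht⟩ := exists_isSl2Triple_sl_fin_two R
  have t' : IsSl2Triple (φ h) (φ e) (φ f) :=
    { h_ne_zero := fun h0 => t.h_ne_zero (φ.injective (h0.trans (map_zero φ).symm))
      lie_e_f := by rw [← LieEquiv.map_lie, t.lie_e_f]
      lie_h_e_nsmul := by rw [← LieEquiv.map_lie, t.lie_h_e_nsmul, map_nsmul]
      lie_h_f_nsmul := by rw [← LieEquiv.map_lie, t.lie_h_f_nsmul, map_neg, map_nsmul] }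
  refine ⟨φ h, φ e, φ f, t', eq_top_iff.mpr fun x _ => ?_⟩
  obtain ⟨a, b, c, hx⟩ := IsSl2Triple.mem_toLieSubalgebra_iff.mp
    (ht ▸ LieSubalgebra.mem_top (φ.symm x) : φ.symm x ∈ t.toLieSubalgebra R)
  refine IsSl2Triple.mem_toLieSubalgebra_iff.mpr ⟨a, b, c, ?_⟩
  rw [← φ.apply_symm_apply x, hx, map_add, map_add, map_smul, map_smul, map_smul, LieEquiv.map_lie]

end SlTwo

section LoweringString

/-- `v` is a lowering string of highest weight `d` spanning `V`: `v 0` is a highest weight vector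
and `v r` is obtained from it by applying `f` repeatedly. The string is infinite, vanishing
beyond `d`. -/
structure IsLoweringString {K L M : Type*} [Field K] [LieRing L] [AddCommGroup M] [Module K M]
    [LieRingModule L M] (h f : L) (V : Submodule K M) (d : ℕ) (v : ℕ → M) : Prop where
  lie_f : ∀ r, ⁅f, v r⁆ = v (r + 1)
  lie_h : ∀ r : ℕ, ⁅h, v r⁆ = ((d : K) - 2 * r) • v r
  span_range : Submodule.span K (Set.range v) = V
  zero_notMem : v 0 ∉ Submodule.span K (Set.range fun r => v (r + 1))

variable {K L M : Type*} [Field K] [LieRing L] [LieAlgebra K L] [AddCommGroup M] [Module K M]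
  [LieRingModule L M] [LieModule K L M] {h e f : L} {t : IsSl2Triple h e f} {m : M}

theorem lie_mem_span_range_pow_toEnd_f {μ : K} (P : t.HasPrimitiveVectorWith m μ)
    (ht : t.toLieSubalgebra K = ⊤) (x : L) {y : M}
    (hy : y ∈ Submodule.span K (Set.range fun r : ℕ => (toEnd K L M f ^ r) m)) :
    ⁅x, y⁆ ∈ Submodule.span K (Set.range fun r : ℕ => (toEnd K L M f ^ r) m) := by
  set W := Submodule.span K (Set.range fun r : ℕ => (toEnd K L M f ^ r) m)
  have string_mem (r : ℕ) : (toEnd K L M f ^ r) m ∈ W := Submodule.subset_span ⟨r, rfl⟩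
  have lie_e_mem : ∀ r : ℕ, ⁅e, (toEnd K L M f ^ r) m⁆ ∈ W
    | 0 => P.lie_e.symm ▸ W.zero_mem
    | r + 1 => (P.lie_e_pow_succ_toEnd_f r).symm ▸ W.smul_mem _ (string_mem r)
  obtain ⟨a, b, c, rfl⟩ := IsSl2Triple.mem_toLieSubalgebra_iff.mp
    (ht ▸ LieSubalgebra.mem_top x : x ∈ t.toLieSubalgebra K)
  induction hy using Submodule.span_induction with
  | mem y hy =>
    obtain ⟨r, rfl⟩ := hy
    rw [add_lie, add_lie, smul_lie, smul_lie, smul_lie, t.lie_e_f, P.lie_f_pow_toEnd_f,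
      P.lie_h_pow_toEnd_f]
    exact add_mem (add_mem (W.smul_mem a (lie_e_mem r)) (W.smul_mem b (string_mem _)))
      (W.smul_mem c (W.smul_mem _ (string_mem r)))
  | zero => rw [lie_zero]; exact W.zero_mem
  | add y z _ _ hy hz => rw [lie_add]; exact add_mem hy hz
  | smul k y _ hy => rw [lie_smul]; exact W.smul_mem k hy

variable [CharZero K]

theorem linearIndependent_pow_toEnd_f {n : ℕ} (P : t.HasPrimitiveVectorWith m (n : K)) :
    LinearIndependent K fun r : Fin (n + 1) => (toEnd K L M f ^ (r : ℕ)) m := by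
  refine Module.End.eigenvectors_linearIndependent' (toEnd K L M h)
    (fun r : Fin (n + 1) => (n : K) - 2 * ((r : ℕ) : K)) (fun a b hab => Fin.ext ?_) _ fun r => ?_
  · simpa using hab
  · exact Module.End.hasEigenvector_iff.mpr
      ⟨Module.End.mem_eigenspace_iff.mpr (P.lie_h_pow_toEnd_f r),
        P.pow_toEnd_f_ne_zero_of_eq_nat rfl (Nat.lt_succ_iff.mp r.2)⟩

variable [FiniteDimensional K M]

theorem pow_toEnd_f_eq_zero_of_lt {n r : ℕ} (P : t.HasPrimitiveVectorWith m (n : K))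
    (hr : n < r) : (toEnd K L M f ^ r) m = 0 := by
  obtain ⟨k, rfl⟩ := Nat.exists_eq_add_of_le hr
  rw [add_comm, pow_add, Module.End.mul_apply, P.pow_toEnd_f_eq_zero_of_eq_nat rfl, map_zero]

theorem isLoweringString_pow_toEnd_f {n : ℕ} (P : t.HasPrimitiveVectorWith m (n : K)) :
    IsLoweringString h f (Submodule.span K (Set.range fun r : ℕ => (toEnd K L M f ^ r) m)) n
      fun r => (toEnd K L M f ^ r) m where
  lie_f := P.lie_f_pow_toEnd_f
  lie_h := P.lie_h_pow_toEnd_f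
  span_range := rfl
  zero_notMem := fun h0 => by
    refine (linearIndependent_pow_toEnd_f P).notMem_span_image (s := {0}ᶜ) (x := 0) (by simp) ?_
    refine Submodule.span_le.mpr ?_ h0
    rintro _ ⟨r, rfl⟩
    rcases le_or_gt (r + 1) n with hr | hr
    · exact Submodule.subset_span ⟨⟨r + 1, Nat.lt_succ_of_le hr⟩, by simp, rfl⟩
    · simp only [pow_toEnd_f_eq_zero_of_lt P hr, SetLike.mem_coe, Submodule.zero_mem]

theorem finrank_span_range_pow_toEnd_f {n : ℕ} (P : t.HasPrimitiveVectorWith m (n : K)) :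
    Module.finrank K (Submodule.span K (Set.range fun r : ℕ => (toEnd K L M f ^ r) m)) =
      n + 1 := by
  have hspan : Submodule.span K (Set.range fun r : ℕ => (toEnd K L M f ^ r) m) =
      Submodule.span K (Set.range fun r : Fin (n + 1) => (toEnd K L M f ^ (r : ℕ)) m) := by
    refine le_antisymm (Submodule.span_le.mpr ?_) (Submodule.span_mono ?_)
    · rintro _ ⟨r, rfl⟩
      rcases le_or_gt r n with hr | hr
      · exact Submodule.subset_span ⟨⟨r, Nat.lt_succ_of_le hr⟩, rfl⟩
      · simp only [pow_toEnd_f_eq_zero_of_lt P hr, SetLike.mem_coe, Submodule.zero_mem]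
    · rintro _ ⟨r, rfl⟩
      exact ⟨r, rfl⟩
  rw [hspan, finrank_span_eq_card (linearIndependent_pow_toEnd_f P), Fintype.card_fin]

end LoweringString

theorem IsIrreducibleSMod.exists_isLoweringString {g : Type*} [LieRing g] [LieAlgebra ℂ g]
    [FiniteDimensional ℂ g] {s : LieSubalgebra ℂ g} {V : Submodule ℂ g}
    (hV : IsIrreducibleSMod g s V) {h e f : s} (t : IsSl2Triple h e f)
    (ht : t.toLieSubalgebra ℂ = ⊤) {d : ℕ} (hd : Module.finrank ℂ V = d + 1) :
    ∃ v, IsLoweringString (h : g) (f : g) V d v := by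
  obtain ⟨hV0, hVinv, hVirr⟩ := hV
  let V' : LieSubmodule ℂ s g := { V with lie_mem := fun {x m} hm => hVinv x x.2 m hm }
  have : Nontrivial V' := Submodule.nontrivial_iff_ne_bot.mpr hV0
  obtain ⟨μ, m, -, P'⟩ := IsSl2Triple.exists_hasPrimitiveVectorWith (R := ℂ) (M := V') t
  obtain ⟨n, rfl⟩ := P'.exists_nat
  have P : t.HasPrimitiveVectorWith (m : g) (n : ℂ) :=
    { ne_zero := fun h0 => P'.ne_zero (Subtype.ext h0)
      lie_h := congrArg Subtype.val P'.lie_h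
      lie_e := congrArg Subtype.val P'.lie_e }
  set W := Submodule.span ℂ (Set.range fun r : ℕ => (toEnd ℂ s g f ^ r) (m : g))
  have m_mem : (m : g) ∈ W := Submodule.subset_span ⟨0, rfl⟩
  have hWV : W ≤ V := by
    refine Submodule.span_le.mpr ?_
    rintro _ ⟨r, rfl⟩
    induction r with
    | zero => exact m.2
    | succ r ih =>
      have := hVinv f f.2 _ ih
      rwa [← LieSubalgebra.coe_bracket_of_module, P.lie_f_pow_toEnd_f] at this
  have hW : W = V :=
    (hVirr W hWV fun x hx w hw => lie_mem_span_range_pow_toEnd_f P ht ⟨x, hx⟩ hw).resolve_left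
      fun hbot => P.ne_zero ((Submodule.mem_bot ℂ).mp (hbot ▸ m_mem))
  have hn : n = d := by
    have := finrank_span_range_pow_toEnd_f P
    rw [show Submodule.span ℂ _ = V from hW, hd] at this
    exact Nat.succ_injective this.symm
  have hv := isLoweringString_pow_toEnd_f P
  exact ⟨_, hv.lie_f, hn ▸ hv.lie_h, hv.span_range.trans hW, hv.zero_notMem⟩

section Pairing

theorem lieSpan2_span_span {g : Type*} [LieRing g] [LieAlgebra ℂ g] (S T : Set g) :
    lieSpan2 g (Submodule.span ℂ S) (Submodule.span ℂ T) =
      Submodule.span ℂ (Set.image2 (fun x y => ⁅x, y⁆) S T) := by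
  refine Eq.trans ?_ (Submodule.map₂_span_span ℂ (toEnd ℂ g g : g →ₗ[ℂ] Module.End ℂ g) S T)
  exact le_antisymm (lieSpan2_le.mpr fun x hx y hy => Submodule.apply_mem_map₂ _ hx hy)
    (Submodule.map₂_le.mpr fun x hx y hy => mem_lieSpan2 hx hy)

theorem IsLoweringString.mem {K L M : Type*} [Field K] [LieRing L] [AddCommGroup M] [Module K M]
    [LieRingModule L M] {h f : L} {V : Submodule K M} {d : ℕ} {v : ℕ → M}
    (hv : IsLoweringString h f V d v) (r : ℕ) : v r ∈ V :=
  hv.span_range.le (Submodule.subset_span ⟨r, rfl⟩)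

theorem IsLoweringString.exists_functional {K L M : Type*} [Field K] [LieRing L] [LieAlgebra K L]
    [AddCommGroup M] [Module K M] [LieRingModule L M] [LieModule K L M] {h f : L}
    {V : Submodule K M} {d : ℕ} {v : ℕ → M} (hv : IsLoweringString h f V d v) :
    ∃ φ : M →ₗ[K] K, φ (v 0) ≠ 0 ∧ (∀ x ∈ V, φ ⁅f, x⁆ = 0) ∧ ∀ x ∈ V, φ ⁅h, x⁆ = d * φ x := by
  obtain ⟨φ, hφ0, hφ⟩ := Submodule.exists_le_ker_of_notMem hv.zero_notMem
  have map_succ (r : ℕ) : φ (v (r + 1)) = 0 := hφ (Submodule.subset_span ⟨r, rfl⟩)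
  have hf : Set.EqOn (φ ∘ₗ toEnd K L M f) (0 : M →ₗ[K] K)
      (Submodule.span K (Set.range v)) := by
    refine LinearMap.eqOn_span' ?_
    rintro _ ⟨r, rfl⟩
    simp [hv.lie_f, map_succ]
  have hh : Set.EqOn (φ ∘ₗ toEnd K L M h) ((d : K) • φ : M →ₗ[K] K)
      (Submodule.span K (Set.range v)) := by
    refine LinearMap.eqOn_span' ?_
    rintro _ ⟨_ | r, rfl⟩ <;> simp [hv.lie_h, map_succ]
  rw [hv.span_range] at hf hh
  exact ⟨φ, hφ0, hf, hh⟩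

variable {g : Type*} [LieRing g] [LieAlgebra ℂ g] {h f : g} {A B Q : Submodule ℂ g} {a b q : ℕ}
  {v w : ℕ → g}

theorem IsLoweringString.apply_lie_eq (hv : IsLoweringString h f A a v)
    (hw : IsLoweringString h f B b w) {φ : g →ₗ[ℂ] ℂ}
    (hφ : ∀ x ∈ lieSpan2 g A B, φ ⁅f, x⁆ = 0) (i j : ℕ) :
    φ ⁅v i, w j⁆ = (-1) ^ i * φ ⁅v 0, w (i + j)⁆ := by
  induction i generalizing j with
  | zero => simp
  | succ i ih =>
    have shift := hφ _ (mem_lieSpan2 (hv.mem i) (hw.mem j))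
    rw [leibniz_lie, hv.lie_f, hw.lie_f, map_add, ih, ← add_assoc, add_right_comm] at shift
    rw [pow_succ]
    linear_combination shift

/-- `φ` reads off the highest weight vector of `Q`. Up to sign `φ ⁅v i, w j⁆` depends only on
`i + j`, so some `φ ⁅v 0, w c⁆` is nonzero, and comparing weights determines `c`. -/
theorem IsLoweringString.exists_eq_add_two_mul (hv : IsLoweringString h f A a v)
    (hw : IsLoweringString h f B b w) {u : ℕ → g} (hu : IsLoweringString h f Q q u)
    (hQ : lieSpan2 g A B = Q) : ∃ (φ : g →ₗ[ℂ] ℂ) (c : ℕ), a + b = q + 2 * c ∧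
      φ ⁅v 0, w c⁆ ≠ 0 ∧ φ ⁅v c, w 0⁆ = (-1) ^ c * φ ⁅v 0, w c⁆ := by
  subst hQ
  obtain ⟨φ, hφ0, hφf, hφh⟩ := hu.exists_functional
  have shift := hv.apply_lie_eq hw hφf
  obtain ⟨c, hc⟩ : ∃ c, φ ⁅v 0, w c⁆ ≠ 0 := by
    by_contra! hzero
    refine hφ0 ((?_ : lieSpan2 g A B ≤ LinearMap.ker φ) (hu.mem 0))
    rw [← hv.span_range, ← hw.span_range, lieSpan2_span_span, Submodule.span_le]
    rintro _ ⟨_, ⟨i, rfl⟩, _, ⟨j, rfl⟩, rfl⟩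
    simp [shift i j, hzero]
  refine ⟨φ, c, ?_, hc, shift c 0⟩
  have hweight := hφh _ (mem_lieSpan2 (hv.mem 0) (hw.mem c))
  rw [leibniz_lie, hv.lie_h, hw.lie_h, smul_lie, lie_smul, ← add_smul, map_smul, smul_eq_mul]
    at hweight
  have hsum := mul_right_cancel₀ hc hweight
  have : ((a + b : ℕ) : ℂ) = ((q + 2 * c : ℕ) : ℂ) := by
    push_cast at hsum ⊢
    linear_combination hsum
  exact_mod_cast this

theorem IsLoweringString.natCast_add_natCast_eq (hv : IsLoweringString h f A a v)
    (hw : IsLoweringString h f B b w) {u : ℕ → g} (hu : IsLoweringString h f Q q u)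
    (hQ : lieSpan2 g A B = Q) : (a + b : ZMod 2) = q := by
  obtain ⟨-, c, hc, -⟩ := hv.exists_eq_add_two_mul hw hu hQ
  rw [← Nat.cast_add, ZMod.natCast_eq_natCast_iff', hc, Nat.add_mul_mod_self_left]

theorem IsLoweringString.exists_odd_of_lieSpan2_self (hv : IsLoweringString h f A a v)
    {u : ℕ → g} (hu : IsLoweringString h f Q q u) (hQ : lieSpan2 g A A = Q) :
    ∃ c, Odd c ∧ 2 * a = q + 2 * c := by
  obtain ⟨φ, c, hc, hne, hsymm⟩ := hv.exists_eq_add_two_mul hv hu hQ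
  refine ⟨c, Nat.not_even_iff_odd.mp fun heven => hne ?_, by omega⟩
  rw [heven.neg_one_pow, one_mul, ← lie_skew, map_neg] at hsymm
  exact self_eq_neg.mp hsymm.symm

theorem IsLoweringString.natCast_eq_natCast (hv : IsLoweringString h f A a v)
    (hw : IsLoweringString h f B b w) {u : ℕ → g} (hu : IsLoweringString h f Q q u)
    (hA : lieSpan2 g A A = Q) (hB : lieSpan2 g B B = Q) : (a : ZMod 2) = b := by
  obtain ⟨c, ⟨i, rfl⟩, hc⟩ := hv.exists_odd_of_lieSpan2_self hu hA
  obtain ⟨c', ⟨j, rfl⟩, hc'⟩ := hw.exists_odd_of_lieSpan2_self hu hB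
  rw [ZMod.natCast_eq_natCast_iff']
  omega

end Pairing

/-! ### Rigid bracket tables -/

section BracketTable

/-- The bracket relations `[V i, V j] = V q` among the summands of a graded nilpotent Lie algebra,
abstracted to a relation `rel i j q` on the indices. `depth` is a position in the lower central
series and `parity` the parity of the highest weight. The field `jacobi` records that a nonzero
`[V a, [V b, V c]]` needs a nonzero `[[V a, V b], V c]` or `[V b, [V a, V c]]`, and `rigid` that
there is no derivation acting on each `V i` as a scalar `l i ∈ ℕ`, except `0`. -/
structure IsRigidBracketTable {ι : Type*} (rel : ι → ι → ι → Prop) (depth : ι → ℕ)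
    (parity : ι → ZMod 2) : Prop where
  symm : ∀ {i j q}, rel i j q → rel j i q
  unique : ∀ {i j q q'}, rel i j q → rel i j q' → q = q'
  depth_lt : ∀ {i j q}, rel i j q → depth j < depth q
  parity_add : ∀ {i j q}, rel i j q → parity i + parity j = parity q
  parity_eq_of_sq : ∀ {i j q}, rel i i q → rel j j q → parity i = parity j
  jacobi : ∀ {a b c q r}, rel b c q → rel a q r →
    (∃ u r', rel a b u ∧ rel u c r') ∨ ∃ u r', rel a c u ∧ rel b u r'
  rigid : ∀ l : ι → ℕ, (∀ i j q, rel i j q → l i + l j = l q) → l = 0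

namespace IsRigidBracketTable

theorem reindex {ι κ : Type*} {rel : ι → ι → ι → Prop} {depth : ι → ℕ} {parity : ι → ZMod 2}
    (T : IsRigidBracketTable rel depth parity) (σ : κ ≃ ι) :
    IsRigidBracketTable (fun i j q => rel (σ i) (σ j) (σ q)) (depth ∘ σ) (parity ∘ σ) where
  symm := T.symm
  unique := fun h h' => σ.injective (T.unique h h')
  depth_lt := T.depth_lt
  parity_add := T.parity_add
  parity_eq_of_sq := T.parity_eq_of_sq
  jacobi := fun h h' => by
    simpa only [σ.exists_congr_left, σ.apply_symm_apply] using T.jacobi h h'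
  rigid := fun l hl => by
    have := T.rigid (l ∘ σ.symm) fun i j q h => hl _ _ _ (by simpa only [σ.apply_symm_apply])
    exact funext fun i => by simpa using congrFun this (σ i)

/-- The key by which indices are sorted: first by parity, then by depth. -/
abbrev sortKey {ι : Type*} (p : ι → ZMod 2) (depth : ι → ℕ) (i : ι) : ℕ ×ₗ ℕ :=
  toLex ((p i).val, depth i)

/-- The constraints that `parity_add` and `depth_lt` impose on `rel i j q` when the indices are
sorted by `sortKey p depth`. -/
abbrev IsAllowed {k : ℕ} (p : Fin k → ZMod 2) (i j q : Fin k) : Prop :=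
  p i + p j = p q ∧ (p i = p q → i < q) ∧ (p j = p q → j < q)

section Sorted

variable {k : ℕ} {rel : Fin k → Fin k → Fin k → Prop} {depth : Fin k → ℕ} {p : Fin k → ZMod 2}

theorem depth_le_of_parity_eq (hsort : Monotone (sortKey p depth))
    {i j : Fin k} (hij : i ≤ j) (hp : p i = p j) : depth i ≤ depth j := by
  simpa [Prod.Lex.toLex_le_toLex, hp] using hsort hij

theorem isAllowed (T : IsRigidBracketTable rel depth p)
    (hsort : Monotone (sortKey p depth)) {i j q : Fin k} (h : rel i j q) :
    IsAllowed p i j q :=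
  ⟨T.parity_add h,
    fun hp => lt_of_not_ge fun hle =>
      (T.depth_lt (T.symm h)).not_ge (depth_le_of_parity_eq hsort hle hp.symm),
    fun hp => lt_of_not_ge fun hle =>
      (T.depth_lt h).not_ge (depth_le_of_parity_eq hsort hle hp.symm)⟩

/-- The weights `l` chosen below solve the additivity equations of all allowed triples outside a
short list `S`, so one of the brackets in `S` has to occur. -/
theorem exists_rel_mem (T : IsRigidBracketTable rel depth p)
    (hsort : Monotone (sortKey p depth)) (l : Fin k → ℕ)
    (S : Finset (Fin k × Fin k × Fin k)) (hl : l ≠ 0)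
    (hS : ∀ i j q, i ≤ j → IsAllowed p i j q → l i + l j ≠ l q → (i, j, q) ∈ S) :
    ∃ t ∈ S, rel t.1 t.2.1 t.2.2 := by
  by_contra! hno
  have additive_of_le {i j q} (hij : i ≤ j) (h : rel i j q) : l i + l j = l q := by
    by_contra hne
    exact hno _ (hS i j q hij (T.isAllowed hsort h) hne) h
  refine hl (T.rigid l fun i j q h => ?_)
  rcases le_total i j with hij | hij
  · exact additive_of_le hij h
  · exact (add_comm _ _).trans (additive_of_le hij (T.symm h))

end Sorted

section FourSummands

variable {rel : Fin 4 → Fin 4 → Fin 4 → Prop} {depth : Fin 4 → ℕ}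

theorem false_of_four_odd (T : IsRigidBracketTable rel depth ![1, 1, 1, 1])
    (hsort : Monotone (sortKey ![1, 1, 1, 1] depth)) : False := by
  obtain ⟨t, ht, -⟩ := T.exists_rel_mem hsort ![1, 1, 1, 1] ∅ (by decide) (by decide)
  exact Finset.notMem_empty t ht

theorem false_of_three_odd (T : IsRigidBracketTable rel depth ![0, 1, 1, 1])
    (hsort : Monotone (sortKey ![0, 1, 1, 1] depth)) : False := by
  have hdepth : depth 2 ≤ depth 3 := depth_le_of_parity_eq hsort (by decide) rfl
  have h12 : ¬ rel 0 1 2 := fun h => by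
    have h3 : rel 0 1 3 ∨ rel 1 2 0 ∨ rel 1 3 0 ∨ rel 2 2 0 ∨ rel 2 3 0 ∨ rel 3 3 0 := by
      simpa using T.exists_rel_mem hsort ![2, 1, 3, 5]
        {(0, 1, 3), (1, 2, 0), (1, 3, 0), (2, 2, 0), (2, 3, 0), (3, 3, 0)} (by decide) (by decide)
    have := T.depth_lt (T.symm h)
    rcases h3 with h' | h' | h' | h' | h' | h'
    · exact absurd (T.unique h h') (by decide)
    all_goals have := T.depth_lt h'; omega
  have h30 : depth 3 < depth 0 := by
    have : rel 1 3 0 ∨ rel 2 3 0 ∨ rel 3 3 0 ∨ rel 0 1 2 := by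
      simpa using T.exists_rel_mem hsort ![2, 1, 1, 3]
        {(1, 3, 0), (2, 3, 0), (3, 3, 0), (0, 1, 2)} (by decide) (by decide)
    rcases this with h | h | h | h
    exacts [T.depth_lt h, T.depth_lt h, T.depth_lt h, absurd h h12]
  have : rel 0 1 2 ∨ rel 0 1 3 ∨ rel 0 2 3 := by
    simpa using T.exists_rel_mem hsort ![2, 1, 1, 1] {(0, 1, 2), (0, 1, 3), (0, 2, 3)}
      (by decide) (by decide)
  rcases this with h | h | h
  · exact h12 h
  all_goals have := T.depth_lt (T.symm h); omega

theorem not_sq_of_two_odd (T : IsRigidBracketTable rel depth ![0, 0, 1, 1]) (h : rel 0 0 1)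
    {i : Fin 4} (hi : ![0, 0, 1, 1] i = (1 : ZMod 2)) : ¬ rel i i 1 := fun h' => by
  simpa [hi] using T.parity_eq_of_sq h h'

theorem rel_of_jacobi_two_odd (T : IsRigidBracketTable rel depth ![0, 0, 1, 1])
    (hsort : Monotone (sortKey ![0, 0, 1, 1] depth))
    (h : rel 2 2 0) (h' : rel 0 0 1) : rel 0 2 3 ∧ ∃ q, rel 2 3 q := by
  obtain ⟨u, q, hu, hq⟩ : ∃ u q, rel 0 2 u ∧ rel 2 u q := by
    rcases T.jacobi h h' with ⟨u, q, hu, hq⟩ | huq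
    exacts [⟨u, q, hu, T.symm hq⟩, huq]
  obtain rfl : u = 3 :=
    (by decide : ∀ u : Fin 4, IsAllowed ![0, 0, 1, 1] 0 2 u → u = 3) u (T.isAllowed hsort hu)
  exact ⟨hu, q, hq⟩

theorem not_rel_one_two_three_of_two_odd (T : IsRigidBracketTable rel depth ![0, 0, 1, 1])
    (hsort : Monotone (sortKey ![0, 0, 1, 1] depth)) :
    ¬ rel 1 2 3 := fun h => by
  have hdepth : depth 0 ≤ depth 1 := depth_le_of_parity_eq hsort (by decide) rfl
  have h13 : depth 1 < depth 3 := T.depth_lt (T.symm h)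
  have not_rel {i q} (hq : rel i 3 q) : q ≠ 0 ∧ q ≠ 1 := by
    have := T.depth_lt hq
    constructor <;> rintro rfl <;> omega
  have h00 : rel 0 0 1 := by
    have : rel 0 0 1 ∨ rel 2 3 0 ∨ rel 2 3 1 ∨ rel 3 3 0 ∨ rel 3 3 1 := by
      simpa using T.exists_rel_mem hsort ![2, 2, 1, 3]
        {(0, 0, 1), (2, 3, 0), (2, 3, 1), (3, 3, 0), (3, 3, 1)} (by decide) (by decide)
    rcases this with h' | h' | h' | h' | h'
    · exact h'
    all_goals simpa using not_rel h'
  have h22 : rel 2 2 0 := by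
    have : rel 2 2 0 ∨ rel 2 2 1 ∨ rel 2 3 0 ∨ rel 2 3 1 ∨ rel 3 3 0 ∨ rel 3 3 1 := by
      simpa using T.exists_rel_mem hsort ![0, 0, 1, 1]
        {(2, 2, 0), (2, 2, 1), (2, 3, 0), (2, 3, 1), (3, 3, 0), (3, 3, 1)} (by decide) (by decide)
    rcases this with h' | h' | h' | h' | h' | h'
    · exact h'
    · exact absurd h' (T.not_sq_of_two_odd h00 rfl)
    all_goals simpa using not_rel h'
  obtain ⟨-, q, hq⟩ := T.rel_of_jacobi_two_odd hsort h22 h00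
  have hq01 : q = 0 ∨ q = 1 :=
    (by decide : ∀ q : Fin 4, IsAllowed ![0, 0, 1, 1] 2 3 q → q = 0 ∨ q = 1) q
      (T.isAllowed hsort hq)
  exact hq01.elim (not_rel hq).1 (not_rel hq).2

theorem rel_zero_two_three_of_two_odd (T : IsRigidBracketTable rel depth ![0, 0, 1, 1])
    (hsort : Monotone (sortKey ![0, 0, 1, 1] depth)) :
    rel 0 2 3 := by
  by_contra h02
  have h12 := T.not_rel_one_two_three_of_two_odd hsort
  have h00 : rel 0 0 1 := by
    have : rel 0 0 1 ∨ rel 0 2 3 ∨ rel 1 2 3 := by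
      simpa using T.exists_rel_mem hsort ![2, 2, 1, 1] {(0, 0, 1), (0, 2, 3), (1, 2, 3)}
        (by decide) (by decide)
    simpa [h02, h12] using this
  have h22' : ¬ rel 2 2 1 := T.not_sq_of_two_odd h00 rfl
  have h33' : ¬ rel 3 3 1 := T.not_sq_of_two_odd h00 rfl
  have h23 : rel 2 3 1 := by
    have : rel 2 2 1 ∨ rel 2 3 1 ∨ rel 3 3 1 ∨ rel 0 2 3 ∨ rel 1 2 3 := by
      simpa using T.exists_rel_mem hsort ![2, 4, 1, 1]
        {(2, 2, 1), (2, 3, 1), (3, 3, 1), (0, 2, 3), (1, 2, 3)} (by decide) (by decide)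
    simpa [h22', h33', h02, h12] using this
  have h23' : ¬ rel 2 3 0 := fun h => absurd (T.unique h h23) (by decide)
  have h22 : rel 2 2 0 := by
    have : rel 2 2 0 ∨ rel 2 2 1 ∨ rel 2 3 0 ∨ rel 3 3 1 ∨ rel 0 2 3 ∨ rel 1 2 3 := by
      simpa using T.exists_rel_mem hsort ![2, 4, 3, 1]
        {(2, 2, 0), (2, 2, 1), (2, 3, 0), (3, 3, 1), (0, 2, 3), (1, 2, 3)} (by decide) (by decide)
    simpa [h22', h23', h33', h02, h12] using this
  exact h02 (T.rel_of_jacobi_two_odd hsort h22 h00).1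

theorem false_of_two_odd (T : IsRigidBracketTable rel depth ![0, 0, 1, 1])
    (hsort : Monotone (sortKey ![0, 0, 1, 1] depth)) : False := by
  have h12 := T.not_rel_one_two_three_of_two_odd hsort
  have h02 := T.rel_zero_two_three_of_two_odd hsort
  have not_rel {i} (hi : rel i 3 0) : False :=
    (T.depth_lt hi).asymm (T.depth_lt (T.symm h02))
  have h23' : ¬ rel 2 3 0 := not_rel
  have h33' : ¬ rel 3 3 0 := not_rel
  have h00 : ¬ rel 0 0 1 := fun h => by
    have h22 : ¬ rel 2 2 1 := T.not_sq_of_two_odd h rfl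
    have h33 : ¬ rel 3 3 1 := T.not_sq_of_two_odd h rfl
    have : rel 2 2 1 ∨ rel 2 3 0 ∨ rel 3 3 0 ∨ rel 3 3 1 ∨ rel 1 2 3 := by
      simpa using T.exists_rel_mem hsort ![2, 4, 1, 3]
        {(2, 2, 1), (2, 3, 0), (3, 3, 0), (3, 3, 1), (1, 2, 3)} (by decide) (by decide)
    simp [h22, h23', h33', h33, h12] at this
  have h22 : rel 2 2 0 := by
    have : rel 0 0 1 ∨ rel 1 2 3 ∨ rel 2 2 0 ∨ rel 2 3 0 ∨ rel 3 3 0 := by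
      simpa using T.exists_rel_mem hsort ![0, 2, 1, 1]
        {(0, 0, 1), (1, 2, 3), (2, 2, 0), (2, 3, 0), (3, 3, 0)} (by decide) (by decide)
    simpa [h00, h12, h23', h33'] using this
  have h22' : ¬ rel 2 2 1 := fun h => absurd (T.unique h h22) (by decide)
  have h33 : rel 3 3 1 := by
    have : rel 2 2 1 ∨ rel 2 3 0 ∨ rel 3 3 0 ∨ rel 3 3 1 ∨ rel 1 2 3 := by
      simpa using T.exists_rel_mem hsort ![2, 4, 1, 3]
        {(2, 2, 1), (2, 3, 0), (3, 3, 0), (3, 3, 1), (1, 2, 3)} (by decide) (by decide)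
    simpa [h22', h23', h33', h12] using this
  rcases T.jacobi h02 h33 with ⟨u, -, hu, -⟩ | ⟨u, q, hu, hq⟩
  · exact (by decide : ∀ u : Fin 4, ¬ IsAllowed ![0, 0, 1, 1] 3 0 u) u (T.isAllowed hsort hu)
  · obtain rfl | rfl : u = 0 ∨ u = 1 :=
      (by decide : ∀ u : Fin 4, IsAllowed ![0, 0, 1, 1] 3 2 u → u = 0 ∨ u = 1) u
        (T.isAllowed hsort hu)
    · exact not_rel (T.symm hu)
    · exact (by decide : ∀ q : Fin 4, ¬ IsAllowed ![0, 0, 1, 1] 0 1 q) q (T.isAllowed hsort hq)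

theorem exists_rel_mem_of_one_odd (T : IsRigidBracketTable rel depth ![0, 0, 0, 1])
    (hsort : Monotone (sortKey ![0, 0, 0, 1] depth))
    (m : Fin 4 → ℕ) (S : Finset (Fin 4 × Fin 4 × Fin 4)) (hm : m 0 ≠ 0)
    (hS : ∀ i j q, i ≤ j → j < 3 → IsAllowed ![0, 0, 0, 1] i j q → m i + m j ≠ m q →
      (i, j, q) ∈ S) : ∃ t ∈ S, rel t.1 t.2.1 t.2.2 := by
  obtain ⟨q₀, hq₀⟩ : ∃ q₀, ∀ q, rel 3 3 q → q = q₀ := by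
    by_cases h : ∃ q₀, rel 3 3 q₀
    exacts [h.imp fun _ h q hq => T.unique hq h, ⟨0, fun q hq => absurd ⟨q, hq⟩ h⟩]
  by_contra! hno
  -- Doubling `m` makes room for the weight `m q₀` of the odd summand, which only brackets with
  -- itself.
  obtain ⟨⟨i, j, q⟩, ht, h⟩ := T.exists_rel_mem hsort (fun i => if i = 3 then m q₀ else 2 * m i)
    (S ∪ ({3} ×ˢ {3} ×ˢ {q₀}ᶜ)) (fun h0 => hm (by simpa using congrFun h0 0))
    fun i j q hij hallowed hne => by
      have hj : i < 3 ∧ j < 3 ∧ q < 3 ∨ i = 3 ∧ j = 3 ∧ q < 3 :=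
        (by decide : ∀ i j q : Fin 4, i ≤ j → IsAllowed ![0, 0, 0, 1] i j q →
          i < 3 ∧ j < 3 ∧ q < 3 ∨ i = 3 ∧ j = 3 ∧ q < 3) i j q hij hallowed
      rcases hj with ⟨hi, hj, hq⟩ | ⟨rfl, rfl, hq⟩
      · refine Finset.mem_union_left _ (hS i j q hij hj hallowed fun h => hne ?_)
        simp only [hi.ne, hj.ne, hq.ne, if_false, ← h, mul_add]
      · refine Finset.mem_union_right _ ?_
        suffices q ≠ q₀ by simpa
        rintro rfl
        exact hne (by simp only [if_true, hq.ne, if_false, two_mul])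
  rcases Finset.mem_union.mp ht with ht | ht
  · exact hno _ ht h
  · obtain ⟨⟨hq, rfl⟩, rfl⟩ : (q ≠ q₀ ∧ 3 = j) ∧ 3 = i := by simpa using ht
    exact hq (hq₀ q h)

theorem false_of_one_odd (T : IsRigidBracketTable rel depth ![0, 0, 0, 1])
    (hsort : Monotone (sortKey ![0, 0, 0, 1] depth)) : False := by
  have h001 : rel 0 0 1 := by
    simpa using T.exists_rel_mem_of_one_odd hsort ![1, 1, 2, 0] {(0, 0, 1)} (by decide) (by decide)
  have h002 : ¬ rel 0 0 2 := fun h => absurd (T.unique h h001) (by decide)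
  have h012 : rel 0 1 2 := by
    have : rel 0 0 2 ∨ rel 0 1 2 := by
      simpa using T.exists_rel_mem_of_one_odd hsort ![1, 2, 4, 0] {(0, 0, 2), (0, 1, 2)}
        (by decide) (by decide)
    exact this.resolve_left h002
  have h112 : rel 1 1 2 := by
    have : rel 0 0 2 ∨ rel 1 1 2 := by
      simpa using T.exists_rel_mem_of_one_odd hsort ![1, 2, 3, 0] {(0, 0, 2), (1, 1, 2)}
        (by decide) (by decide)
    exact this.resolve_left h002
  obtain ⟨u, q, hu, hq⟩ : ∃ u q, rel 1 0 u ∧ rel u 0 q := by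
    rcases T.jacobi h001 h112 with huq | ⟨u, q, hu, hq⟩
    exacts [huq, ⟨u, q, hu, T.symm hq⟩]
  obtain rfl : u = 2 := T.unique hu (T.symm h012)
  exact (by decide : ∀ q : Fin 4, ¬ IsAllowed ![0, 0, 0, 1] 2 0 q) q (T.isAllowed hsort hq)

theorem parity_eq_zero {parity : Fin 4 → ZMod 2} (T : IsRigidBracketTable rel depth parity) :
    parity = 0 := by
  let σ := Tuple.sort (sortKey parity depth)
  have hsort : Monotone (sortKey (parity ∘ σ) (depth ∘ σ)) :=
    Tuple.monotone_sort (sortKey parity depth)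
  have T' := T.reindex σ
  suffices hσ : parity ∘ σ = 0 from
    funext fun i => by simpa using congrFun hσ (σ.symm i)
  have hval : Monotone fun i => ((parity ∘ σ) i).val := fun i j hij =>
    Prod.Lex.monotone_fst _ _ (hsort hij)
  generalize parity ∘ σ = p at *
  obtain rfl | rfl | rfl | rfl | rfl := (by decide : ∀ p : Fin 4 → ZMod 2,
    (∀ i j, i ≤ j → (p i).val ≤ (p j).val) → p = 0 ∨ p = ![0, 0, 0, 1] ∨ p = ![0, 0, 1, 1] ∨
      p = ![0, 1, 1, 1] ∨ p = ![1, 1, 1, 1]) p fun i j hij => hval hij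
  exacts [rfl, (T'.false_of_one_odd hsort).elim, (T'.false_of_two_odd hsort).elim,
    (T'.false_of_three_odd hsort).elim, (T'.false_of_four_odd hsort).elim]

end FourSummands

end IsRigidBracketTable

end BracketTable

/-! ### The bracket table of a Lie algebra -/

section Depth

/-- The step at which the lower central series of the action of `I` on `L` stops containing `V`;
`0` by convention if it never does. -/
noncomputable def lcsDepth {R L : Type*} [CommRing R] [LieRing L] [LieAlgebra R L]
    (I : LieIdeal R L) (V : Submodule R L) : ℕ :=
  sInf {m | ¬ V ≤ (I.lcs L m).toSubmodule}

theorem lcsDepth_lt_lcsDepth_lieSpan2 {g : Type*} [LieRing g] [LieAlgebra ℂ g]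
    {I : LieIdeal ℂ g} {n : ℕ} (hI : I.lcs g n = ⊥) {A B : Submodule ℂ g}
    (hA : A ≤ I.toSubmodule) (hAB : lieSpan2 g A B ≠ ⊥) :
    lcsDepth I B < lcsDepth I (lieSpan2 g A B) := by
  have hne : {m | ¬ lieSpan2 g A B ≤ (I.lcs g m).toSubmodule}.Nonempty :=
    ⟨n, by simpa [hI] using hAB⟩
  have hmem : ¬ lieSpan2 g A B ≤ (I.lcs g (lcsDepth I (lieSpan2 g A B))).toSubmodule :=
    Nat.sInf_mem hne
  cases hm : lcsDepth I (lieSpan2 g A B) with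
  | zero => exact absurd (le_top : _ ≤ (⊤ : Submodule ℂ g)) (hm ▸ hmem)
  | succ m =>
    rw [hm, LieIdeal.lcs_succ] at hmem
    refine Nat.lt_succ_of_le (Nat.sInf_le fun hB => hmem (lieSpan2_le.mpr fun x hx y hy => ?_))
    exact LieSubmodule.lie_mem_lie (hA hx) (hB hy)

end Depth

section Table

variable {g : Type*} [LieRing g] [LieAlgebra ℂ g]

theorem lieSpan2_lieSpan2_ne_bot {A B C : Submodule ℂ g}
    (h : lieSpan2 g A (lieSpan2 g B C) ≠ ⊥) :
    lieSpan2 g (lieSpan2 g A B) C ≠ ⊥ ∨ lieSpan2 g B (lieSpan2 g A C) ≠ ⊥ := by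
  contrapose! h
  obtain ⟨h₁, h₂⟩ := h
  rw [eq_bot_iff, lieSpan2_comm, lieSpan2_le]
  intro u hu x hx
  suffices lieSpan2 g B C ≤ LinearMap.ker (LieModule.toEnd ℂ g g x : g →ₗ[ℂ] g) by
    rw [← lie_skew]
    exact neg_mem ((Submodule.mem_bot ℂ).mpr (this hu))
  refine lieSpan2_le.mpr fun y hy z hz => ?_
  have hxy := h₁ ▸ mem_lieSpan2 (mem_lieSpan2 hx hy) hz
  have hxz := h₂ ▸ mem_lieSpan2 hy (mem_lieSpan2 hx hz)
  rw [Submodule.mem_bot] at hxy hxz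
  rw [LinearMap.mem_ker, LieModule.toEnd_apply_apply, leibniz_lie, hxy, hxz, add_zero]

variable {k : ℕ} {V : Fin k → Submodule ℂ g}

theorem Convention.jacobi (hconv : Convention g V) (hV : ∀ i, V i ≠ ⊥) {a b c q r : Fin k}
    (hbc : lieSpan2 g (V b) (V c) = V q) (haq : lieSpan2 g (V a) (V q) = V r) :
    (∃ u r', lieSpan2 g (V a) (V b) = V u ∧ lieSpan2 g (V u) (V c) = V r') ∨
      ∃ u r', lieSpan2 g (V a) (V c) = V u ∧ lieSpan2 g (V b) (V u) = V r' := by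
  have lieSpan2_bot (A : Submodule ℂ g) : lieSpan2 g A ⊥ = ⊥ :=
    eq_bot_iff.mpr <| lieSpan2_le.mpr fun x _ y hy => by
      rw [(Submodule.mem_bot ℂ).mp hy, lie_zero]; exact zero_mem _
  rw [← hbc] at haq
  refine (lieSpan2_lieSpan2_ne_bot (haq ▸ hV r)).imp (fun h => ?_) fun h => ?_
  · obtain ⟨u, hu, -⟩ := hconv a b fun h0 => h (by rw [h0, lieSpan2_comm, lieSpan2_bot])
    obtain ⟨r', hr', -⟩ := hconv u c (hu ▸ h)
    exact ⟨u, r', hu, hr'⟩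
  · obtain ⟨u, hu, -⟩ := hconv a c fun h0 => h (by rw [h0, lieSpan2_bot])
    obtain ⟨r', hr', -⟩ := hconv b u (hu ▸ h)
    exact ⟨u, r', hu, hr'⟩

theorem isRigidBracketTable [FiniteDimensional ℂ g] (hperf : IsPerfectLie g)
    (hder : ∀ D : LieDerivation ℂ g g, IsInnerDer D) {s : LieSubalgebra ℂ g}
    (hs : IsSl2Levi g s) (hdec : IsDecomp g s V) (hconv : Convention g V) {d : Fin k → ℕ}
    (hd : ∀ i, Module.finrank ℂ (V i) = d i + 1) :
    IsRigidBracketTable (fun i j q => lieSpan2 g (V i) (V j) = V q)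
      (fun i => lcsDepth (LieAlgebra.radical ℂ g) (V i)) (fun i => (d i : ZMod 2)) := by
  obtain ⟨⟨φ⟩, hcompl⟩ := hs
  obtain ⟨h, e, f, t, ht⟩ := exists_isSl2Triple_of_equiv_sl_fin_two φ.symm
  have hV (i) : V i ≠ ⊥ := (hdec.1 i).1
  choose v hv using fun i => (hdec.1 i).exists_isLoweringString t ht (hd i)
  obtain ⟨n, hn⟩ := exists_lcs_eq_bot_of_isCompl hperf hcompl
  exact
    { symm := fun {i j q} hij => (lieSpan2_comm (V j) (V i)).trans hij
      unique := fun {i j q q'} hq hq' => (hconv i j (hq ▸ hV q)).unique hq hq'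
      depth_lt := fun {i j q} hij => hij ▸ lcsDepth_lt_lcsDepth_lieSpan2 hn
        ((le_iSup V i).trans_eq hdec.2.2) (hij ▸ hV q)
      parity_add := fun {i j q} hij => (hv i).natCast_add_natCast_eq (hv j) (hv q) hij
      parity_eq_of_sq := fun {i j q} hi hj => (hv i).natCast_eq_natCast (hv j) (hv q) hi hj
      jacobi := hconv.jacobi hV
      rigid := fun _ => eq_zero_of_additive hperf hder hcompl hdec hconv }

end Table

end Symp

theorem stmt14_general (g : Type*) [LieRing g] [LieAlgebra ℂ g] [FiniteDimensional ℂ g]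
    (hperf : Symp.IsPerfectLie g) (hder : ∀ D : LieDerivation ℂ g g, Symp.IsInnerDer D)
    (s : LieSubalgebra ℂ g) (hs : Symp.IsSl2Levi g s)
    (V : Fin 4 → Submodule ℂ g) (hdec : Symp.IsDecomp g s V)
    (hconv : Symp.Convention g V)
    (d : Fin 4 → ℕ) (hd : ∀ i, Module.finrank ℂ (V i) = d i + 1) :
    ∀ i, Even (d i) := by
  have parity_eq_zero := (Symp.isRigidBracketTable hperf hder hs hdec hconv hd).parity_eq_zero
  exact fun i => ZMod.natCast_eq_zero_iff_even.mp (congrFun parity_eq_zero i)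

/-- for a sympathetic `g = sl₂(ℂ) ⋉ h` with 4 simple modules and
`Z(h) = V_k`, all highest weights are even. Here `V 3 = V_k` and `d i` is the highest
weight of `V i` (so `dim V i = d i + 1`). -/
theorem stmt14 (g : Type*) [LieRing g] [LieAlgebra ℂ g] [FiniteDimensional ℂ g]
    (hsymp : Symp.IsSympathetic g)
    (s : LieSubalgebra ℂ g) (hs : Symp.IsSl2Levi g s)
    (V : Fin 4 → Submodule ℂ g) (hdec : Symp.IsDecomp g s V)
    (hconv : Symp.Convention g V)
    (d : Fin 4 → ℕ) (hd : ∀ i, Module.finrank ℂ (V i) = d i + 1)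
    (hZ : Symp.centerRad g = V 3) :
    ∀ i, Even (d i) :=
  stmt14_general g hsymp.2.1 hsymp.2.2 s hs V hdec hconv d hd
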